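/- Let G and H be connected quasi-transitive locally finite graphs and let (G1, G2) be a factorisation of G. If H has precisely one end and embeds quasi-isometrically into G, then H embeds quasi-isometrically into G1 or into G2. -/

import Mathlib

open SimpleGraph

universe u v

/-! ### Quasi-isometries -/

/-- `f` is a `(γ, c)`-quasi-isometry from `G` to `H`. -/
def IsQIWith {V : Type u} {W : Type v} (G : SimpleGraph V) (H : SimpleGraph W)
    (γ c : ℝ) (f : V → W) : Prop :=
  (∀ u v : V, γ⁻¹ * (G.dist u v : ℝ) - c ≤ (H.dist (f u) (f v) : ℝ) ∧
      (H.dist (f u) (f v) : ℝ) ≤ γ * (G.dist u v : ℝ) + c) ∧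
  ∀ w : W, ∃ x : V, (H.dist w (f x) : ℝ) ≤ c

/-- `G` and `H` are quasi-isometric. -/
def QuasiIsometric {V : Type u} {W : Type v} (G : SimpleGraph V) (H : SimpleGraph W) : Prop :=
  ∃ (γ c : ℝ) (f : V → W), 1 ≤ γ ∧ 0 ≤ c ∧ IsQIWith G H γ c f

/-- `H` embeds quasi-isometrically into `G`. -/
def QIEmbeds {V : Type u} {W : Type v} (H : SimpleGraph V) (G : SimpleGraph W) : Prop :=
  ∃ (γ c : ℝ) (f : V → W), 1 ≤ γ ∧ 0 ≤ c ∧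
    ∀ u v : V, γ⁻¹ * (H.dist u v : ℝ) - c ≤ (G.dist (f u) (f v) : ℝ) ∧
      (G.dist (f u) (f v) : ℝ) ≤ γ * (H.dist u v : ℝ) + c

/-! ### Basic graph properties -/

/-- Every vertex has finite degree. -/
def LocallyFiniteGraph {V : Type u} (G : SimpleGraph V) : Prop :=
  ∀ v : V, (G.neighborSet v).Finite

/-- The automorphism group of `G` has finitely many orbits on the vertex set. -/
def QuasiTransitive {V : Type u} (G : SimpleGraph V) : Prop :=
  ∃ s : Set V, s.Finite ∧ ∀ v : V, ∃ u ∈ s, ∃ g : G ≃g G, g u = v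

/-- The automorphism group of `G` acts transitively on the vertex set. -/
def VertexTransitive {V : Type u} (G : SimpleGraph V) : Prop :=
  ∀ u v : V, ∃ g : G ≃g G, g u = v

/-- `G` has exactly one end. -/
def OneEnded {V : Type u} (G : SimpleGraph V) : Prop :=
  Nonempty G.end ∧ Subsingleton G.end

/-- `G` and `H` have the same number of ends (in the sense `0, 1, 2, …, ∞`). -/
def SameNumberOfEnds {V : Type u} {W : Type v} (G : SimpleGraph V) (H : SimpleGraph W) : Prop :=
  (Infinite G.end ∧ Infinite H.end) ∨
    (Finite G.end ∧ Finite H.end ∧ Nat.card G.end = Nat.card H.end)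

/-- There is `n : ℕ` such that every two distinct ends of `G` can be separated by removing
at most `n` vertices. -/
def Accessible {V : Type u} (G : SimpleGraph V) : Prop :=
  ∃ n : ℕ, ∀ e e' : G.end, e ≠ e' →
    ∃ K : Finset V, K.card ≤ n ∧ e.val (Opposite.op K) ≠ e'.val (Opposite.op K)

/-- `T` is a tree all of whose vertices have degree `3`. -/
def CubicTree {W : Type u} (T : SimpleGraph W) : Prop :=
  T.IsTree ∧ ∀ v : W, (T.neighborSet v).ncard = 3

/-! ### Tree amalgamations -/

/-- The bipartite graph on `VT1 ⊕ VT2` given by the relation `R`. -/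
def bipGraph {VT1 VT2 : Type u} (R : VT1 → VT2 → Prop) : SimpleGraph (VT1 ⊕ VT2) :=
  SimpleGraph.fromRel fun x y =>
    match x, y with
    | Sum.inl a, Sum.inr b => R a b
    | _, _ => False

/-- All the data of a tree amalgamation `G1 ∗_T G2`: a semiregular tree (given by its
bipartition classes `VT1`, `VT2` and the adjacency relation `Tadj`), a labelling of the
edges of the tree by pairs of indices from `K1 × K2` such that the labels at each vertex of
`VTi` biject with `Ki` in the `i`-th coordinate, families of adhesion sets `S1`, `S2`
(all of the same cardinality), and the gluing bijections `glue k l : S1 k → S2 l`. -/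
structure TreeAmalgData {V1 V2 : Type u} (G1 : SimpleGraph V1) (G2 : SimpleGraph V2) :
    Type (u + 1) where
  VT1 : Type u
  VT2 : Type u
  K1 : Type u
  K2 : Type u
  Tadj : VT1 → VT2 → Prop
  isTree : (bipGraph Tadj).IsTree
  lab1 : ∀ a b, Tadj a b → K1
  lab2 : ∀ a b, Tadj a b → K2
  lab1_bij : ∀ a : VT1, Function.Bijective fun b : {b : VT2 // Tadj a b} => lab1 a b.1 b.2
  lab2_bij : ∀ b : VT2, Function.Bijective fun a : {a : VT1 // Tadj a b} => lab2 a.1 b a.2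
  S1 : K1 → Set V1
  S2 : K2 → Set V2
  S1_nonempty : ∀ k, (S1 k).Nonempty
  glue : K1 → K2 → V1 → V2
  glue_bij : ∀ k l, Set.BijOn (glue k l) (S1 k) (S2 l)

namespace TreeAmalgData

variable {V1 V2 : Type u} {G1 : SimpleGraph V1} {G2 : SimpleGraph V2}

/-- The vertex set of the graph `G1 + G2`. -/
abbrev PlusV (D : TreeAmalgData G1 G2) : Type u := (D.VT1 × V1) ⊕ (D.VT2 × V2)

/-- The relation describing the edges added between the copies `G1^u` and `G2^v`. -/
def cross (D : TreeAmalgData G1 G2) (p : D.VT1 × V1) (q : D.VT2 × V2) : Prop :=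
  ∃ h : D.Tadj p.1 q.1, p.2 ∈ D.S1 (D.lab1 p.1 q.1 h) ∧
    q.2 = D.glue (D.lab1 p.1 q.1 h) (D.lab2 p.1 q.1 h) p.2

def plusRel (D : TreeAmalgData G1 G2) : D.PlusV → D.PlusV → Prop
  | Sum.inl p, Sum.inl p' => p.1 = p'.1 ∧ G1.Adj p.2 p'.2
  | Sum.inr q, Sum.inr q' => q.1 = q'.1 ∧ G2.Adj q.2 q'.2
  | Sum.inl p, Sum.inr q => D.cross p q
  | Sum.inr _, Sum.inl _ => False

/-- The graph `G1 + G2`: disjoint copies of `G1` and `G2` along the tree, together with the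
added matching edges between adhesion sets. -/
def plusGraph (D : TreeAmalgData G1 G2) : SimpleGraph D.PlusV :=
  SimpleGraph.fromRel D.plusRel

/-- The relation identifying the endpoints of the added edges (which get contracted). -/
def idRel (D : TreeAmalgData G1 G2) : D.PlusV → D.PlusV → Prop :=
  fun x y => ∃ p q, x = Sum.inl p ∧ y = Sum.inr q ∧ D.cross p q

/-- Vertex set of the tree amalgamation `G1 ∗_T G2`. -/
abbrev AmalgV (D : TreeAmalgData G1 G2) : Type u := Quot D.idRel

/-- The canonical contraction map `ψ : V(G1 + G2) → V(G1 ∗_T G2)`. -/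
def toAmalg (D : TreeAmalgData G1 G2) : D.PlusV → D.AmalgV := Quot.mk _

/-- The tree amalgamation `G1 ∗_T G2`, obtained from `G1 + G2` by contracting all the
added edges. -/
def amalgGraph (D : TreeAmalgData G1 G2) : SimpleGraph D.AmalgV :=
  SimpleGraph.fromRel fun x y =>
    ∃ a b, x = D.toAmalg a ∧ y = D.toAmalg b ∧ D.plusGraph.Adj a b

/-- The tree vertex at which a vertex of `G1 + G2` lives. -/
def site (D : TreeAmalgData G1 G2) : D.PlusV → D.VT1 ⊕ D.VT2
  | Sum.inl p => Sum.inl p.1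
  | Sum.inr q => Sum.inr q.1

/-- The set of tree vertices hosting representatives of `x`; the identification size of `x`
is the number of its elements. -/
def support (D : TreeAmalgData G1 G2) (x : D.AmalgV) : Set (D.VT1 ⊕ D.VT2) :=
  {t | ∃ p, D.toAmalg p = x ∧ D.site p = t}

/-- Every vertex of `G1 ∗_T G2` has finite identification size. -/
def FiniteIdentification (D : TreeAmalgData G1 G2) : Prop :=
  ∀ x : D.AmalgV, (D.support x).Finite

/-- All adhesion sets are finite. -/
def FiniteAdhesion (D : TreeAmalgData G1 G2) : Prop :=
  (∀ k, (D.S1 k).Finite) ∧ ∀ l, (D.S2 l).Finite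

/-- The tree amalgamation is trivial: the contraction map restricts to a bijection on some
copy of `G1` or of `G2`. -/
def IsTrivial (D : TreeAmalgData G1 G2) : Prop :=
  (∃ a : D.VT1, Function.Bijective fun x : V1 => D.toAmalg (Sum.inl (a, x))) ∨
  ∃ b : D.VT2, Function.Bijective fun y : V2 => D.toAmalg (Sum.inr (b, y))

end TreeAmalgData

/-- Some group of automorphisms of `G` acts with finitely many orbits on the vertices of `G`
and with finitely many orbits on the family `S` of adhesion sets of `G`. -/
def GoodAction {V : Type u} (G : SimpleGraph V) {K : Type u} (S : K → Set V) : Prop :=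
  ∃ Γ : Subgroup (G ≃g G),
    (∃ s : Set V, s.Finite ∧ ∀ v : V, ∃ u ∈ s, ∃ g ∈ Γ, g u = v) ∧
    ∃ I : Set K, I.Finite ∧ ∀ k : K, ∃ k' ∈ I, ∃ g ∈ Γ, ⇑g '' S k' = S k

/-- A bundled graph. -/
structure BGraph : Type (u + 1) where
  V : Type u
  G : SimpleGraph V

/-- `Z` is (isomorphic to) a tree amalgamation of `X` and `Y` of finite adhesion and finite
identification. -/
def AmalgStep (X Y Z : BGraph.{u}) : Prop :=
  ∃ D : TreeAmalgData X.G Y.G,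
    D.FiniteAdhesion ∧ D.FiniteIdentification ∧ Nonempty (Z.G ≃g D.amalgGraph)

/-- `Z` is (isomorphic to) a tree amalgamation of `X` and `Y` of finite adhesion and finite
identification such that some group of automorphisms of each factor acts with finitely many
orbits on that factor and on the set of its adhesion sets. -/
def GoodAmalgStep (X Y Z : BGraph.{u}) : Prop :=
  ∃ D : TreeAmalgData X.G Y.G,
    D.FiniteAdhesion ∧ D.FiniteIdentification ∧
    GoodAction X.G D.S1 ∧ GoodAction Y.G D.S2 ∧ Nonempty (Z.G ≃g D.amalgGraph)

/-- `Z` is obtained from the list `l` of graphs by iterated tree amalgamations of finite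
adhesion and finite identification. -/
inductive IterAmalg : BGraph.{u} → List BGraph.{u} → Prop
  | single (X : BGraph) : IterAmalg X [X]
  | step {X Y Z : BGraph} {l1 l2 : List BGraph} :
      IterAmalg X l1 → IterAmalg Y l2 → AmalgStep X Y Z → IterAmalg Z (l1 ++ l2)

/-- `Z` is obtained from the list `l` of graphs by iterated tree amalgamations of finite
adhesion and finite identification with quasi-transitive actions on the factors and their
adhesion sets. -/
inductive GoodIterAmalg : BGraph.{u} → List BGraph.{u} → Prop
  | single (X : BGraph) : GoodIterAmalg X [X]
  | step {X Y Z : BGraph} {l1 l2 : List BGraph} :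
      GoodIterAmalg X l1 → GoodIterAmalg Y l2 → GoodAmalgStep X Y Z →
        GoodIterAmalg Z (l1 ++ l2)

/-- `l` is a factorisation of the graph `Gb`. -/
def IsFactorisation (Gb : BGraph.{u}) (l : List BGraph.{u}) : Prop :=
  (∀ X ∈ l, X.G.Connected ∧ LocallyFiniteGraph X.G ∧ QuasiTransitive X.G) ∧
    GoodIterAmalg Gb l

/-- A factorisation is terminal if every factor has at most one end. -/
def IsTerminal (l : List BGraph.{u}) : Prop := ∀ X ∈ l, Subsingleton X.G.end


/-! ### Branches of trees -/

section Branch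

variable {τ : Type*}

/-- Vertices of `T` reachable from `s` while avoiding `t`. -/
def Branch (T : SimpleGraph τ) (t s : τ) : Set τ :=
  {u | Relation.ReflTransGen (fun a b => T.Adj a b ∧ b ≠ t) s u}

variable {T : SimpleGraph τ}

theorem Branch.self_mem (t s : τ) : s ∈ Branch T t s := Relation.ReflTransGen.refl

theorem Branch.step {t s u u' : τ} (hu : u ∈ Branch T t s) (h : T.Adj u u') (h' : u' ≠ t) :
    u' ∈ Branch T t s := Relation.ReflTransGen.tail hu ⟨h, h'⟩

theorem Branch.ne {t s u : τ} (hs : T.Adj t s) (hu : u ∈ Branch T t s) : u ≠ t := by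
  induction hu with
  | refl => exact hs.ne'
  | tail _ h _ => exact h.2

theorem Branch.cross (hT : T.IsTree) {t s u : τ} (hs : T.Adj t s) (hu : u ∈ Branch T t s)
    (h : T.Adj u t) : u = s := by
  by_contra hne
  have key : ∀ v, v ∈ Branch T t s → (T.deleteEdges {s(t, s)}).Reachable s v := by
    intro v hv
    induction hv with
    | refl => exact Reachable.refl _
    | tail hb h ih =>
      rename_i b c
      refine ih.trans (Adj.reachable ?_)
      rw [deleteEdges_adj]
      refine ⟨h.1, ?_⟩
      have hb' : b ≠ t := Branch.ne hs hb
      have := h.2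
      simp only [Set.mem_singleton_iff, Sym2.eq_iff]
      tauto
  have hbr : T.IsBridge s(t, s) := isAcyclic_iff_forall_isBridge.1 hT.2 hs
  rw [isBridge_iff] at hbr
  apply hbr
  refine ((key u hu).trans (Adj.reachable ?_)).symm
  rw [deleteEdges_adj]
  refine ⟨h, ?_⟩
  simp only [Set.mem_singleton_iff, Sym2.eq_iff]
  have := hs.ne
  tauto

theorem Branch.exists_of_ne (hT : T.IsTree) {t u : τ} (hu : u ≠ t) :
    ∃ s, T.Adj t s ∧ u ∈ Branch T t s := by
  obtain ⟨w⟩ := hT.1.preconnected u t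
  induction w with
  | nil => exact absurd rfl hu
  | cons h p ih =>
    rename_i a b c
    by_cases hb : b = c
    · subst hb; exact ⟨a, h.symm, Branch.self_mem _ _⟩
    · obtain ⟨s, hs, hm⟩ := ih hb
      exact ⟨s, hs, Branch.step hm h.symm hu⟩

theorem Branch.compl (hT : T.IsTree) {t s : τ} (u : τ) :
    u ∈ Branch T t s ∨ u ∈ Branch T s t := by
  obtain ⟨w⟩ := hT.1.preconnected u t
  induction w with
  | nil => exact Or.inr (Branch.self_mem _ _)
  | cons h p ih =>
    rename_i a b c
    by_cases h1 : a = c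
    · subst h1; exact Or.inr (Branch.self_mem _ _)
    by_cases h2 : a = s
    · subst h2; exact Or.inl (Branch.self_mem _ _)
    rcases ih with ih | ih
    · exact Or.inl (Branch.step ih h.symm h1)
    · exact Or.inr (Branch.step ih h.symm h2)

theorem Branch.disj (hT : T.IsTree) {t s u : τ} (hs : T.Adj t s) (h1 : u ∈ Branch T t s)
    (h2 : u ∈ Branch T s t) : False := by
  induction h2 with
  | refl => exact Branch.ne hs h1 rfl
  | tail hb h ih =>
    rename_i b c
    by_cases hbt : b = t
    · subst hbt
      exact h.2 (Branch.cross hT hs h1 h.1.symm)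
    · exact ih (Branch.step h1 h.1.symm hbt)

theorem Branch.unique (hT : T.IsTree) {t s s' u : τ} (hs : T.Adj t s) (hs' : T.Adj t s')
    (h1 : u ∈ Branch T t s) (h2 : u ∈ Branch T t s') : s = s' := by
  induction h2 with
  | refl => exact (Branch.cross hT hs h1 hs'.symm).symm
  | tail hb h ih =>
    exact ih (Branch.step h1 h.1.symm (Branch.ne hs' hb))

theorem Branch.nest {p q r u : τ} (hpq : T.Adj p q) (hqr : T.Adj q r)
    (hne : p ≠ r) (hT : T.IsTree) (hu : u ∈ Branch T q p) : u ∈ Branch T r q := by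
  induction hu with
  | refl => exact Branch.step (Branch.self_mem r q) hpq.symm hne
  | tail hb h ih =>
    rename_i b c
    refine Branch.step ih h.1 ?_
    rintro rfl
    have := Branch.cross hT hqr.symm ih h.1
    exact Branch.ne hpq.symm hb this

end Branch

/-! ### Ends -/

section Ends

variable {V : Type u} {G : SimpleGraph V}

theorem ball_finite (hc : G.Connected) (hlf : LocallyFiniteGraph G) (z : V) (n : ℕ) :
    {v | G.dist z v ≤ n}.Finite := by
  induction n with
  | zero =>
    refine (Set.finite_singleton z).subset ?_
    intro v hv
    have : G.dist z v = 0 := by simpa using hv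
    exact ((hc.dist_eq_zero_iff).1 this).symm
  | succ n ih =>
    refine (ih.union (ih.biUnion (fun v _ => hlf v))).subset ?_
    intro v hv
    obtain ⟨w, hw⟩ := hc.exists_walk_length_eq_dist v z
    have hv' : G.dist v z ≤ n + 1 := by rw [G.dist_comm]; exact hv
    cases w with
    | nil => left; simp
    | cons h p =>
      rename_i b
      right
      simp only [Set.mem_iUnion]
      refine ⟨b, ?_, h.symm⟩
      have := dist_le p
      simp only [Walk.length_cons] at hw
      change G.dist z b ≤ n
      rw [G.dist_comm]; omega

theorem infinite_comp_unique (hc : G.Connected) (hlf : LocallyFiniteGraph G)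
    (hone : Subsingleton G.end) (K : Finset V) (C D : G.ComponentCompl K)
    (hC : C.supp.Infinite) (hD : D.supp.Infinite) : C = D := by
  classical
  have : LocallyFinite G := fun v => (hlf v).fintype
  have : Fact G.Preconnected := ⟨hc.preconnected⟩
  have : Infinite V := by
    by_contra h
    rw [not_infinite_iff_finite] at h
    exact hC (Set.toFinite _)
  let F := G.componentComplFunctor
  have hfin : ∀ j, Finite (F.obj j) := fun j => G.componentCompl_finite j.unop
  have hne : ∀ j, Nonempty (F.obj j) := fun j => G.componentCompl_nonempty_of_infinite j.unop
  have hML : F.IsMittagLeffler :=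
    F.isMittagLeffler_of_exists_finite_range fun j => ⟨j, CategoryTheory.CategoryStruct.id j,
      Set.toFinite _⟩
  have := F.toEventualRanges_nonempty hML
  have hsur := F.toEventualRanges.eval_section_surjective_of_surjective
    (F.surjective_toEventualRanges hML) (Opposite.op K)
  have hC' : C ∈ F.eventualRange (Opposite.op K) := (G.infinite_iff_in_eventualRange C).1 hC
  have hD' : D ∈ F.eventualRange (Opposite.op K) := (G.infinite_iff_in_eventualRange D).1 hD
  obtain ⟨sC, h1⟩ := hsur ⟨C, hC'⟩
  obtain ⟨sD, h2⟩ := hsur ⟨D, hD'⟩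
  have he : F.toEventualRangesSectionsEquiv sC = F.toEventualRangesSectionsEquiv sD :=
    @Subsingleton.elim _ hone _ _
  have he' := F.toEventualRangesSectionsEquiv.injective he
  rw [he'] at h1
  have := h1.symm.trans h2
  exact congrArg Subtype.val this

theorem uniform_end_aux (hc : G.Connected) (hlf : LocallyFiniteGraph G)
    (hone : Subsingleton G.end) (D : ℕ) (z : V) :
    ∃ D' : ℕ, ∀ h1 h2, D' < G.dist z h1 → D' < G.dist z h2 →
      Relation.ReflTransGen
        (fun a b => G.Adj a b ∧ D < G.dist z a ∧ D < G.dist z b) h1 h2 := by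
  classical
  have : LocallyFinite G := fun v => (hlf v).fintype
  have : Fact G.Preconnected := ⟨hc.preconnected⟩
  let K : Finset V := (ball_finite hc hlf z D).toFinset
  have hK : ∀ v, v ∉ K ↔ D < G.dist z v := by intro v; simp [K]
  let S : Set V := ⋃ C ∈ {C : G.ComponentCompl K | C.supp.Finite}, C.supp
  have hS : S.Finite := Set.Finite.biUnion (Set.toFinite _) (fun C hC => hC)
  obtain ⟨B, hB⟩ := (hS.image (fun v => G.dist z v)).bddAbove
  refine ⟨max D B, ?_⟩
  have key : ∀ h, max D B < G.dist z h → ∃ hk : h ∉ (K : Set V),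
      (G.componentComplMk hk).supp.Infinite := by
    intro h hh
    have hk : h ∉ K := (hK h).2 (lt_of_le_of_lt (le_max_left _ _) hh)
    refine ⟨by simpa using hk, ?_⟩
    intro hfin
    have hm : h ∈ S := Set.mem_biUnion (x := G.componentComplMk (by simpa using hk)) hfin
      (componentComplMk_mem _ _)
    have := hB ⟨h, hm, rfl⟩
    have := le_max_right D B
    simp only at *
    omega
  intro h1 h2 hh1 hh2
  obtain ⟨k1, i1⟩ := key h1 hh1
  obtain ⟨k2, i2⟩ := key h2 hh2
  have he := infinite_comp_unique hc hlf hone K _ _ i1 i2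
  rw [ConnectedComponent.eq] at he
  obtain ⟨w⟩ := he
  have gen : ∀ (a b : ((K : Set V)ᶜ : Set V)) (w : (G.induce (K : Set V)ᶜ).Walk a b),
      Relation.ReflTransGen
        (fun a b => G.Adj a b ∧ D < G.dist z a ∧ D < G.dist z b) a.1 b.1 := by
    intro a b w
    induction w with
    | nil => exact Relation.ReflTransGen.refl
    | cons h p ih =>
      rename_i a b c
      refine Relation.ReflTransGen.head ⟨h, (hK _).1 ?_, (hK _).1 ?_⟩ ih
      · exact a.2
      · exact b.2
  exact gen _ _ w

theorem dist_iso_le (g : G ≃g G) (hc : G.Connected) (a b : V) :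
    G.dist (g a) (g b) ≤ G.dist a b := by
  obtain ⟨w, hw⟩ := hc.exists_walk_length_eq_dist a b
  rw [← hw, ← Walk.length_map g.toHom w]
  exact dist_le _

theorem dist_iso (g : G ≃g G) (hc : G.Connected) (a b : V) :
    G.dist (g a) (g b) = G.dist a b := by
  refine le_antisymm (dist_iso_le g hc a b) ?_
  have := dist_iso_le g.symm hc (g a) (g b)
  simpa using this

theorem uniform_end (hc : G.Connected) (hlf : LocallyFiniteGraph G) (hqt : QuasiTransitive G)
    (hone : Subsingleton G.end) (D : ℕ) :
    ∃ D' : ℕ, ∀ z h1 h2, D' < G.dist z h1 → D' < G.dist z h2 →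
      Relation.ReflTransGen
        (fun a b => G.Adj a b ∧ D < G.dist z a ∧ D < G.dist z b) h1 h2 := by
  obtain ⟨s, hs, hor⟩ := hqt
  choose f hf using uniform_end_aux hc hlf hone D
  obtain ⟨B, hB⟩ := (hs.image f).bddAbove
  refine ⟨B, ?_⟩
  intro z h1 h2 hh1 hh2
  obtain ⟨u, hu, g, rfl⟩ := hor z
  have hBu : f u ≤ B := hB ⟨u, hu, rfl⟩
  have e : ∀ h, G.dist (g u) h = G.dist u (g.symm h) := by
    intro h
    rw [← dist_iso g hc u (g.symm h)]; simp
  have := hf u (g.symm h1) (g.symm h2) (by rw [← e]; omega) (by rw [← e]; omega)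
  have h3 := Relation.ReflTransGen.lift
    (p := fun a b => G.Adj a b ∧ D < G.dist (g u) a ∧ D < G.dist (g u) b) g ?_ _ _ this
  · simpa [Function.onFun] using h3
  · rintro a b ⟨h, ha, hb⟩
    refine ⟨g.map_adj_iff.2 h, ?_, ?_⟩
    · rw [dist_iso g hc]; exact ha
    · rw [dist_iso g hc]; exact hb

end Ends

/-! ### Tree decompositions -/

/-- A tree-decomposition, recorded by the set of bags containing a given vertex. -/
structure TreeDec {V τ : Type u} (G : SimpleGraph V) (T : SimpleGraph τ)
    (supp : V → Set τ) : Prop where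
  tree : T.IsTree
  nonempty : ∀ x, (supp x).Nonempty
  fin : ∀ x, (supp x).Finite
  conn : ∀ x p q, p ∈ supp x → q ∈ supp x →
    Relation.ReflTransGen (fun a b => T.Adj a b ∧ a ∈ supp x ∧ b ∈ supp x) p q
  adj : ∀ x y, G.Adj x y → ∃ t, t ∈ supp x ∧ t ∈ supp y
  adh : ∀ t s, T.Adj t s → ∃ x, t ∈ supp x ∧ s ∈ supp x

namespace TreeDec

variable {V τ VH : Type u} {G : SimpleGraph V} {T : SimpleGraph τ} {supp : V → Set τ}
  {H : SimpleGraph VH}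

/-- A bag-set which meets the branch at `t` through `s` and contains a point outside of it
contains both `t` and `s`. -/
theorem leave (hD : TreeDec G T supp) {t s u v : τ} (hts : T.Adj t s) {x : V}
    (hu : u ∈ supp x) (hv : v ∈ supp x) (hu' : u ∈ Branch T t s) (hv' : v ∉ Branch T t s) :
    t ∈ supp x ∧ s ∈ supp x := by
  have hc := hD.conn x u v hu hv
  induction hc with
  | refl => exact absurd hu' hv'
  | tail hb h ih =>
    rename_i b c
    by_cases hbB : b ∈ Branch T t s
    · have hct : c = t := by
        by_contra hne
        exact hv' (Branch.step hbB h.1 hne)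
      subst hct
      have := Branch.cross hD.tree hts hbB h.1
      subst this
      exact ⟨h.2.2, h.2.1⟩
    · exact ih h.2.1 hbB

theorem both (hD : TreeDec G T supp) {t s u v : τ} (hts : T.Adj t s) {x : V}
    (hu : u ∈ supp x) (hv : v ∈ supp x) (hu' : u ∈ Branch T t s) (hv' : v ∈ Branch T s t) :
    t ∈ supp x ∧ s ∈ supp x :=
  hD.leave hts hu hv hu' (fun h => Branch.disj hD.tree hts h hv')

/-- `x` meets the branch at `t` through `s`. -/
def Meets (T : SimpleGraph τ) (supp : V → Set τ) (t s : τ) (x : V) : Prop :=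
  ∃ u ∈ supp x, u ∈ Branch T t s

theorem meets_or (hD : TreeDec G T supp) (t s : τ) (x : V) :
    Meets T supp t s x ∨ Meets T supp s t x := by
  obtain ⟨u, hu⟩ := hD.nonempty x
  rcases Branch.compl hD.tree (t := t) (s := s) u with h | h
  · exact Or.inl ⟨u, hu, h⟩
  · exact Or.inr ⟨u, hu, h⟩

theorem both_meets (hD : TreeDec G T supp) {t s : τ} (hts : T.Adj t s) {x : V}
    (h1 : Meets T supp t s x) (h2 : Meets T supp s t x) : t ∈ supp x ∧ s ∈ supp x := by
  obtain ⟨u, hu, hu'⟩ := h1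
  obtain ⟨v, hv, hv'⟩ := h2
  exact hD.both hts hu hv hu' hv'

theorem walk_cross (hD : TreeDec G T supp) {t s : τ} (hts : T.Adj t s) {x y : V}
    (w : G.Walk x y) (h1 : Meets T supp t s x) (h2 : Meets T supp s t y) :
    ∃ a, t ∈ supp a ∧ s ∈ supp a ∧ G.dist x a ≤ w.length := by
  induction w with
  | nil =>
    obtain ⟨p, q⟩ := hD.both_meets hts h1 h2
    exact ⟨_, p, q, by simp⟩
  | cons h p ih =>
    rename_i x x' y
    by_cases hx : Meets T supp s t x
    · obtain ⟨p, q⟩ := hD.both_meets hts h1 hx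
      exact ⟨x, p, q, by simp⟩
    · obtain ⟨u, hu, hu'⟩ := hD.adj _ _ h
      have hx' : Meets T supp t s x' := by
        rcases Branch.compl hD.tree (t := t) (s := s) u with hb | hb
        · exact ⟨u, hu', hb⟩
        · exact absurd ⟨u, hu, hb⟩ hx
      obtain ⟨a, ha, hb, hd⟩ := ih hx' h2
      refine ⟨a, ha, hb, ?_⟩
      by_cases hr : G.Reachable x' a
      · obtain ⟨w, hw⟩ := hr.exists_walk_length_eq_dist
        have := dist_le (Walk.cons h w)
        simp only [Walk.length_cons] at this ⊢
        omega
      · have : ¬ G.Reachable x a := fun h' => hr (h.symm.reachable.trans h')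
        rw [dist_eq_zero_of_not_reachable this]
        omega

/-- All points of `φ(H)` meeting the branch at `t` through `s` are close to the adhesion set. -/
def Small (G : SimpleGraph V) (T : SimpleGraph τ) (supp : V → Set τ) (φ : VH → V) (R : ℕ)
    (t s : τ) : Prop :=
  ∀ h, Meets T supp t s (φ h) → ∃ a, t ∈ supp a ∧ s ∈ supp a ∧ G.dist (φ h) a ≤ R

theorem exists_small (hD : TreeDec G T supp) (hcG : G.Connected)
    (hcH : H.Connected) (hlfH : LocallyFiniteGraph H) (hqtH : QuasiTransitive H)
    (hone : Subsingleton H.end) (M : ℕ)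
    (hM : ∀ t s x y, T.Adj t s → t ∈ supp x → s ∈ supp x → t ∈ supp y → s ∈ supp y →
      G.dist x y ≤ M)
    (φ : VH → V) (γ c : ℝ) (hγ : 1 ≤ γ) (hc : 0 ≤ c)
    (hφ : ∀ u v : VH, γ⁻¹ * (H.dist u v : ℝ) - c ≤ (G.dist (φ u) (φ v) : ℝ) ∧
      (G.dist (φ u) (φ v) : ℝ) ≤ γ * (H.dist u v : ℝ) + c) :
    ∃ R : ℕ, ∀ t s, T.Adj t s → Small G T supp φ R t s ∨ Small G T supp φ R s t := by
  obtain ⟨L, hL⟩ := exists_nat_ge (γ + c)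
  have hγ0 : 0 < γ := by linarith
  have hadj : ∀ a b, H.Adj a b → G.dist (φ a) (φ b) ≤ L := by
    intro a b hab
    have h1 := (hφ a b).2
    have h2 : H.dist a b = 1 := dist_eq_one_iff_adj.2 hab
    rw [h2] at h1
    have : (G.dist (φ a) (φ b) : ℝ) ≤ L := by push_cast at h1; linarith
    exact_mod_cast this
  obtain ⟨D, hDD⟩ := exists_nat_ge (γ * (2 * L + M + c))
  obtain ⟨D', hD'⟩ := uniform_end hcH hlfH hqtH hone D
  obtain ⟨R, hR⟩ := exists_nat_ge (γ * D' + c + L + M)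
  refine ⟨R, ?_⟩
  intro t s hts
  -- crossing step
  have hstep : ∀ a b, H.Adj a b → Meets T supp t s (φ a) → ¬ Meets T supp t s (φ b) →
      ∃ x, t ∈ supp x ∧ s ∈ supp x ∧ G.dist (φ a) x ≤ L := by
    intro a b hab h1 h2
    have h3 := (hD.meets_or t s (φ b)).resolve_left h2
    obtain ⟨w, hw⟩ := hcG.exists_walk_length_eq_dist (φ a) (φ b)
    obtain ⟨x, hx1, hx2, hx3⟩ := hD.walk_cross hts w h1 h3
    exact ⟨x, hx1, hx2, hx3.trans (hw ▸ hadj a b hab)⟩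
  by_cases hZ : ∃ z a, t ∈ supp a ∧ s ∈ supp a ∧ G.dist (φ z) a ≤ L
  · obtain ⟨z, a, hta, hsa, hza⟩ := hZ
    have hfar : ∀ h, D < H.dist z h → ∀ x, t ∈ supp x → s ∈ supp x → ¬ G.dist (φ h) x ≤ L := by
      intro h hh x htx hsx hle
      have h1 := (hφ z h).1
      have h2 : G.dist (φ z) (φ h) ≤ L + M + L := by
        have e1 := hcG.dist_triangle (u := φ z) (v := a) (w := φ h)
        have e2 := hcG.dist_triangle (u := a) (v := x) (w := φ h)
        have e3 := hM t s a x hts hta hsa htx hsx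
        have e4 : G.dist x (φ h) ≤ L := by rw [G.dist_comm]; exact hle
        omega
      have h3 : (G.dist (φ z) (φ h) : ℝ) ≤ L + M + L := by exact_mod_cast h2
      have h4 : γ⁻¹ * (H.dist z h : ℝ) ≤ 2 * L + M + c := by linarith
      have h5 : (H.dist z h : ℝ) ≤ γ * (2 * L + M + c) := by
        rwa [inv_mul_le_iff₀ hγ0] at h4
      have h6 : (H.dist z h : ℝ) ≤ D := h5.trans hDD
      have h7 : H.dist z h ≤ D := by exact_mod_cast h6
      omega
    have hnear : ∀ h, ¬ D' < H.dist z h → G.dist (φ h) a ≤ R := by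
      intro h hh
      have h1 := (hφ h z).2
      have h2 : (H.dist h z : ℝ) ≤ D' := by
        rw [H.dist_comm]; exact_mod_cast not_lt.1 hh
      have h3 : (G.dist (φ h) a : ℝ) ≤ G.dist (φ h) (φ z) + G.dist (φ z) a := by
        exact_mod_cast hcG.dist_triangle
      have h4 : (G.dist (φ z) a : ℝ) ≤ L := by exact_mod_cast hza
      have h5 : γ * (H.dist h z : ℝ) ≤ γ * D' := mul_le_mul_of_nonneg_left h2 hγ0.le
      have : (G.dist (φ h) a : ℝ) ≤ R := by
        have : (0 : ℝ) ≤ M := by positivity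
        linarith
      exact_mod_cast this
    by_cases hex : ∃ h, D' < H.dist z h ∧ Meets T supp t s (φ h)
    · obtain ⟨h0, hh0, hm0⟩ := hex
      right
      intro h hm
      refine ⟨a, hsa, hta, ?_⟩
      by_cases hh : D' < H.dist z h
      · -- then `h` meets both sides, so lies in the adhesion set
        have hch := hD' z h0 h hh0 hh
        have hm' : Meets T supp t s (φ h) := by
          clear hm hh
          induction hch with
          | refl => exact hm0
          | tail hb e ih =>
            by_contra hcon
            obtain ⟨x, hx1, hx2, hx3⟩ := hstep _ _ e.1 ih hcon
            exact hfar _ e.2.1 x hx1 hx2 hx3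
        obtain ⟨h1, h2⟩ := hD.both_meets hts hm' hm
        have e1 := hM t s (φ h) a hts h1 h2 hta hsa
        have : (M : ℝ) ≤ R := by
          have : 0 ≤ γ * (D' : ℝ) := by positivity
          have : (0 : ℝ) ≤ L := by positivity
          linarith
        exact e1.trans (by exact_mod_cast this)
      · exact hnear h hh
    · left
      intro h hm
      refine ⟨a, hta, hsa, hnear h (fun hh => hex ⟨h, hh, hm⟩)⟩
  · by_cases hex : ∃ h, Meets T supp t s (φ h)
    · right
      obtain ⟨h0, hm0⟩ := hex
      intro h hm
      exfalso
      have hm' : Meets T supp t s (φ h) := by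
        obtain ⟨w⟩ := hcH.preconnected h h0
        clear hm
        induction w with
        | nil => exact hm0
        | cons e p ih =>
          by_contra hcon
          obtain ⟨x, hx1, hx2, hx3⟩ := hstep _ _ e.symm (ih hm0) hcon
          exact hZ ⟨_, x, hx1, hx2, hx3⟩
      obtain ⟨h1, h2⟩ := hD.both_meets hts hm' hm
      exact hZ ⟨h, φ h, h1, h2, by simp⟩
    · left
      intro h hm
      exact absurd ⟨h, hm⟩ hex

theorem exists_sink (hD : TreeDec G T supp) (hcG : G.Connected) (hlfG : LocallyFiniteGraph G)
    (h0 : VH) (φ : VH → V) (R : ℕ)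
    (hR : ∀ t s, T.Adj t s → Small G T supp φ R t s ∨ Small G T supp φ R s t) :
    ∃ t, ∀ h, ∃ a, t ∈ supp a ∧ G.dist (φ h) a ≤ R := by
  by_cases hsink : ∃ t, ∀ s, T.Adj t s → Small G T supp φ R t s
  · obtain ⟨t, ht⟩ := hsink
    refine ⟨t, fun h => ?_⟩
    by_cases hth : t ∈ supp (φ h)
    · exact ⟨φ h, hth, by simp⟩
    · obtain ⟨u, hu⟩ := hD.nonempty (φ h)
      have hut : u ≠ t := by rintro rfl; exact hth hu
      obtain ⟨s, hs, hm⟩ := Branch.exists_of_ne hD.tree hut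
      obtain ⟨a, h1, _, h3⟩ := ht s hs h ⟨u, hu, hm⟩
      exact ⟨a, h1, h3⟩
  · exfalso
    push Not at hsink
    choose nx hnx1 hnx2 using hsink
    obtain ⟨t0, ht0⟩ := hD.nonempty (φ h0)
    let f : ℕ → τ := fun n => nx^[n] t0
    have hf : ∀ n, f (n + 1) = nx (f n) := fun n => Function.iterate_succ_apply' nx n t0
    have hfa : ∀ n, T.Adj (f n) (f (n + 1)) := fun n => by rw [hf]; exact hnx1 _
    have hbig : ∀ n, ¬ Small G T supp φ R (f n) (f (n + 1)) := fun n => by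
      rw [hf]; exact hnx2 _
    have hsmall : ∀ n, Small G T supp φ R (f (n + 1)) (f n) := fun n =>
      (hR _ _ (hfa n)).resolve_left (hbig n)
    have hne : ∀ n, f n ≠ f (n + 2) := by
      intro n he
      have h1 := hsmall n
      have h2 := hbig (n + 1)
      rw [he] at h1
      exact h2 h1
    have hB : ∀ n m, m ≤ n → f m ∈ Branch T (f (n + 1)) (f n) := by
      intro n
      induction n with
      | zero => intro m hm; obtain rfl : m = 0 := by omega
                exact Branch.self_mem _ _
      | succ n ih =>
        intro m hm
        rcases Nat.lt_or_ge n m with h | h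
        · obtain rfl : m = n + 1 := by omega
          exact Branch.self_mem _ _
        · exact Branch.nest (hfa n) (hfa (n + 1)) (hne n) hD.tree (ih m h)
    have hinj : Function.Injective f := by
      have : ∀ m n, m < n → f m ≠ f n := by
        intro m n hmn
        obtain ⟨k, rfl⟩ : ∃ k, n = k + 1 := ⟨n - 1, by omega⟩
        exact Branch.ne (hfa k).symm (hB k m (by omega))
      intro m n he
      rcases lt_trichotomy m n with h | h | h
      · exact absurd he (this _ _ h)
      · exact h
      · exact absurd he.symm (this _ _ h)
    have hfin : (⋃ a ∈ {a | G.dist (φ h0) a ≤ R}, supp a).Finite :=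
      (ball_finite hcG hlfG (φ h0) R).biUnion (fun a _ => hD.fin a)
    refine Set.infinite_range_of_injective hinj (hfin.subset ?_)
    rintro _ ⟨n, rfl⟩
    obtain ⟨a, _, h2, h3⟩ := hsmall n h0 ⟨t0, ht0, hB n 0 (Nat.zero_le _)⟩
    exact Set.mem_biUnion (x := a) h3 h2

theorem exists_retract (hD : TreeDec G T supp) {P : Type u} (t : τ) (ι : P → V)
    (hrange : ∀ x, t ∈ supp x ↔ ∃ p, ι p = x) (x : V) :
    ∃ p : P, (t ∈ supp x → ι p = x) ∧ ∀ s, T.Adj t s → ∀ u ∈ supp x, u ∈ Branch T t s →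
      s ∈ supp (ι p) := by
  by_cases hx : t ∈ supp x
  · obtain ⟨p, hp⟩ := (hrange x).1 hx
    refine ⟨p, fun _ => hp, fun s hs u hu hub => ?_⟩
    rw [hp]
    exact (hD.leave hs hu hx hub (fun h => Branch.ne hs h rfl)).2
  · obtain ⟨u, hu⟩ := hD.nonempty x
    have hut : u ≠ t := by rintro rfl; exact hx hu
    obtain ⟨s, hs, hm⟩ := Branch.exists_of_ne hD.tree hut
    obtain ⟨y, hy1, hy2⟩ := hD.adh t s hs
    obtain ⟨p, rfl⟩ := (hrange y).1 hy1
    refine ⟨p, fun h => absurd h hx, fun s' hs' v hv hvb => ?_⟩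
    have hvs : v ∈ Branch T t s := by
      by_contra hcon
      exact hx (hD.leave hs hu hv hm hcon).1
    rw [← Branch.unique hD.tree hs hs' hvs hvb]
    exact hy2

theorem lipschitz {A B : Type u} {X : SimpleGraph A} {Y : SimpleGraph B} (hX : X.Connected)
    (hY : Y.Connected) (f : A → B) (C : ℕ) (h : ∀ a b, X.Adj a b → Y.dist (f a) (f b) ≤ C)
    (a b : A) : Y.dist (f a) (f b) ≤ C * X.dist a b := by
  obtain ⟨w, hw⟩ := hX.exists_walk_length_eq_dist a b
  rw [← hw]
  clear hw
  induction w with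
  | nil => simp
  | cons e p ih =>
    rename_i a b c
    have h1 := hY.dist_triangle (u := f a) (v := f b) (w := f c)
    have h2 := h a b e
    rw [Walk.length_cons, Nat.mul_add]
    omega

theorem qi_bag (hD : TreeDec G T supp) (hcG : G.Connected) {P : Type u} {W : SimpleGraph P}
    (hcW : W.Connected) (t : τ) (ι : P → V) (M : ℕ)
    (hrange : ∀ x, t ∈ supp x ↔ ∃ p, ι p = x) (hinj : Function.Injective ι)
    (hadjG : ∀ p q, W.Adj p q → G.dist (ι p) (ι q) ≤ 1)
    (hadj : ∀ x y, G.Adj x y → ∃ u, u ∈ supp x ∧ u ∈ supp y ∧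
      (u = t → ∃ p q, ι p = x ∧ ι q = y ∧ W.dist p q ≤ 1))
    (hM : ∀ s p q, T.Adj t s → s ∈ supp (ι p) → s ∈ supp (ι q) → W.dist p q ≤ M)
    (φ : VH → V) (γ c : ℝ) (hγ : 1 ≤ γ) (hc : 0 ≤ c)
    (hφ : ∀ u v : VH, γ⁻¹ * (H.dist u v : ℝ) - c ≤ (G.dist (φ u) (φ v) : ℝ) ∧
      (G.dist (φ u) (φ v) : ℝ) ≤ γ * (H.dist u v : ℝ) + c) (R : ℕ)
    (hR : ∀ h, ∃ a, t ∈ supp a ∧ G.dist (φ h) a ≤ R) : QIEmbeds H W := by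
  choose ρ hρ1 hρ2 using hD.exists_retract t ι hrange
  have hρι : ∀ p, ρ (ι p) = p := fun p => hinj (hρ1 _ ((hrange _).2 ⟨p, rfl⟩))
  have hlip : ∀ x y, W.dist (ρ x) (ρ y) ≤ (M + 1) * G.dist x y := by
    apply lipschitz hcG hcW
    intro x y hxy
    obtain ⟨u, hux, huy, hu⟩ := hadj x y hxy
    by_cases hut : u = t
    · obtain ⟨p, q, rfl, rfl, hpq⟩ := hu hut
      rw [hρι, hρι]; omega
    · obtain ⟨s, hs, hm⟩ := Branch.exists_of_ne hD.tree hut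
      have := hM s _ _ hs (hρ2 x s hs u hux hm) (hρ2 y s hs u huy hm)
      omega
  have hlip2 : ∀ p q, G.dist (ι p) (ι q) ≤ W.dist p q := by
    intro p q
    have := lipschitz hcW hcG ι 1 hadjG p q
    omega
  have hclose : ∀ h, G.dist (φ h) (ι (ρ (φ h))) ≤ R + (M + 1) * R := by
    intro h
    obtain ⟨a, hta, hda⟩ := hR h
    obtain ⟨p, rfl⟩ := (hrange a).1 hta
    have h1 := hlip (ι p) (φ h)
    rw [hρι, G.dist_comm] at h1
    have h2 := hlip2 p (ρ (φ h))
    have h3 := hcG.dist_triangle (u := φ h) (v := ι p) (w := ι (ρ (φ h)))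
    have h4 := Nat.mul_le_mul_left (M + 1) hda
    omega
  refine ⟨(M + 1) * γ, (M + 1) * c + 2 * (R + (M + 1) * R), fun h => ρ (φ h), ?_, ?_, ?_⟩
  · have : (0 : ℝ) ≤ M := by positivity
    nlinarith
  · positivity
  · intro u v
    have hM0 : (0 : ℝ) ≤ M := by positivity
    obtain ⟨h1, h2⟩ := hφ u v
    have hγ0 : 0 < γ := by linarith
    have hd0 : (0 : ℝ) ≤ H.dist u v := by positivity
    constructor
    · have e1 : G.dist (φ u) (φ v) ≤ W.dist (ρ (φ u)) (ρ (φ v)) + 2 * (R + (M + 1) * R) := by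
        have a1 := hcG.dist_triangle (u := φ u) (v := ι (ρ (φ u))) (w := φ v)
        have a2 := hcG.dist_triangle (u := ι (ρ (φ u))) (v := ι (ρ (φ v))) (w := φ v)
        have a3 := hclose u
        have a4 := hclose v
        rw [G.dist_comm] at a4
        have a5 := hlip2 (ρ (φ u)) (ρ (φ v))
        omega
      have e2 : (G.dist (φ u) (φ v) : ℝ) ≤
          W.dist (ρ (φ u)) (ρ (φ v)) + 2 * (R + (M + 1) * R) := by exact_mod_cast e1
      have e3 : ((M + 1) * γ)⁻¹ ≤ γ⁻¹ := by
        apply inv_anti₀ hγ0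
        nlinarith
      have e4 := mul_le_mul_of_nonneg_right e3 hd0
      have e5 : c ≤ (M + 1) * c := by nlinarith
      linarith
    · have e1 : (W.dist (ρ (φ u)) (ρ (φ v)) : ℝ) ≤ (M + 1) * G.dist (φ u) (φ v) := by
        exact_mod_cast hlip (φ u) (φ v)
      have e2 : ((M : ℝ) + 1) * G.dist (φ u) (φ v) ≤ (M + 1) * (γ * H.dist u v + c) :=
        mul_le_mul_of_nonneg_left h2 (by positivity)
      have e3 : (0 : ℝ) ≤ 2 * (R + (M + 1) * R) := by positivity
      linarith

end TreeDec

/-! ### The tree decomposition of a tree amalgamation -/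

theorem goodAction_bound {V : Type u} {G : SimpleGraph V} {K : Type u} {S : K → Set V}
    (hc : G.Connected) (hfin : ∀ k, (S k).Finite) (h : GoodAction G S) :
    ∃ M : ℕ, ∀ k, ∀ x ∈ S k, ∀ y ∈ S k, G.dist x y ≤ M := by
  obtain ⟨Γ, -, I, hI, hor⟩ := h
  have hb : ∀ k, ∃ M : ℕ, ∀ x ∈ S k, ∀ y ∈ S k, G.dist x y ≤ M := by
    intro k
    obtain ⟨B, hB⟩ := (((hfin k).prod (hfin k)).image (fun p : V × V => G.dist p.1 p.2)).bddAbove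
    exact ⟨B, fun x hx y hy => hB ⟨(x, y), ⟨hx, hy⟩, rfl⟩⟩
  choose f hf using hb
  obtain ⟨B, hB⟩ := (hI.image f).bddAbove
  refine ⟨B, fun k x hx y hy => ?_⟩
  obtain ⟨k', hk', g, -, hg⟩ := hor k
  rw [← hg] at hx hy
  obtain ⟨x, hx, rfl⟩ := hx
  obtain ⟨y, hy, rfl⟩ := hy
  rw [dist_iso g hc]
  exact (hf k' x hx y hy).trans (hB ⟨k', hk', rfl⟩)

namespace TreeAmalgData

variable {V1 V2 : Type u} {G1 : SimpleGraph V1} {G2 : SimpleGraph V2}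

theorem bip_adj_lr {A B : Type u} {R : A → B → Prop} {a : A} {b : B} :
    (bipGraph R).Adj (Sum.inl a) (Sum.inr b) ↔ R a b := by
  simp [bipGraph, SimpleGraph.fromRel_adj]

theorem bip_adj_rl {A B : Type u} {R : A → B → Prop} {a : A} {b : B} :
    (bipGraph R).Adj (Sum.inr b) (Sum.inl a) ↔ R a b := by
  simp [bipGraph, SimpleGraph.fromRel_adj]

theorem bip_adj_ll {A B : Type u} {R : A → B → Prop} {a b : A} :
    ¬ (bipGraph R).Adj (Sum.inl a) (Sum.inl b) := by
  simp [bipGraph, SimpleGraph.fromRel_adj]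

theorem bip_adj_rr {A B : Type u} {R : A → B → Prop} {a b : B} :
    ¬ (bipGraph R).Adj (Sum.inr a) (Sum.inr b) := by
  simp [bipGraph, SimpleGraph.fromRel_adj]

/-- Being joined by an added edge. -/
def Lnk (D : TreeAmalgData G1 G2) (p q : D.PlusV) : Prop := D.idRel p q ∨ D.idRel q p

theorem Lnk.symm {D : TreeAmalgData G1 G2} {p q : D.PlusV} (h : D.Lnk p q) : D.Lnk q p :=
  Or.symm h

theorem Lnk.adj {D : TreeAmalgData G1 G2} {p q : D.PlusV} (h : D.Lnk p q) :
    (bipGraph D.Tadj).Adj (D.site p) (D.site q) := by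
  rcases h with ⟨p, q, rfl, rfl, h, -⟩ | ⟨p, q, rfl, rfl, h, -⟩
  · exact bip_adj_lr.2 h
  · exact bip_adj_rl.2 h

theorem Lnk.back {D : TreeAmalgData G1 G2} {p q r : D.PlusV} (h : D.Lnk p q) (h' : D.Lnk q r)
    (hs : D.site r = D.site p) : r = p := by
  rcases h with ⟨⟨a, v⟩, ⟨b, w⟩, rfl, rfl, h⟩ | ⟨⟨a, v⟩, ⟨b, w⟩, rfl, rfl, h⟩
  · rcases h' with ⟨_, _, h1, _, _⟩ | ⟨⟨a', v'⟩, ⟨b', w'⟩, rfl, h1, h'⟩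
    · cases h1
    · cases h1
      obtain rfl : a' = a := by simpa [site] using hs
      obtain ⟨e1, e2, e3⟩ := h
      obtain ⟨f1, f2, f3⟩ := h'
      have := (D.glue_bij _ _).injOn e2 f2 (e3.symm.trans f3)
      simp only at this
      rw [this]
  · rcases h' with ⟨⟨a', v'⟩, ⟨b', w'⟩, h1, rfl, h'⟩ | ⟨_, _, _, h1, _⟩
    · cases h1
      obtain rfl : b' = b := by simpa [site] using hs
      obtain ⟨e1, e2, e3⟩ := h
      obtain ⟨f1, f2, f3⟩ := h'
      have := f3.trans e3.symm
      simp only at this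
      rw [this]
    · cases h1

/-- Reduced chains of added edges starting at `p0`; the arguments are the last two vertices. -/
inductive Red (D : TreeAmalgData G1 G2) (p0 : D.PlusV) : D.PlusV → D.PlusV → Prop
  | first {q : D.PlusV} : D.Lnk p0 q → Red D p0 p0 q
  | next {p q r : D.PlusV} : Red D p0 p q → D.Lnk q r → D.site r ≠ D.site p → Red D p0 q r

theorem Red.lnk {D : TreeAmalgData G1 G2} {p0 p q : D.PlusV} (h : Red D p0 p q) : D.Lnk p q := by
  cases h with
  | first h => exact h
  | next _ h _ => exact h

theorem Red.branch {D : TreeAmalgData G1 G2} {p0 p q : D.PlusV} (h : Red D p0 p q) :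
    D.site p0 ∈ Branch (bipGraph D.Tadj) (D.site q) (D.site p) := by
  induction h with
  | first h => exact Branch.self_mem _ _
  | next h1 h2 h3 ih => exact Branch.nest h1.lnk.adj h2.adj h3.symm D.isTree ih

theorem chain_of_eq (D : TreeAmalgData G1 G2) {p q : D.PlusV} (h : D.toAmalg p = D.toAmalg q) :
    Relation.ReflTransGen D.Lnk p q := by
  have hg := Quot.eqvGen_exact h
  clear h
  induction hg with
  | rel _ _ h => exact Relation.ReflTransGen.single (Or.inl h)
  | refl _ => exact Relation.ReflTransGen.refl
  | symm a b _ ih =>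
    clear * - ih
    induction ih with
    | refl => exact Relation.ReflTransGen.refl
    | tail _ h ih => exact Relation.ReflTransGen.head (Lnk.symm h) ih
  | trans a b c h1 h2 i1 i2 => exact i1.trans i2

theorem red_of_chain (D : TreeAmalgData G1 G2) {p q : D.PlusV}
    (h : Relation.ReflTransGen D.Lnk p q) : q = p ∨ ∃ r, Red D p r q := by
  induction h with
  | refl => exact Or.inl rfl
  | @tail b c hb h ih =>
    rcases ih with rfl | ⟨r, hr⟩
    · exact Or.inr ⟨_, Red.first h⟩
    · by_cases hs : D.site c = D.site r
      · obtain rfl := hr.lnk.back h hs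
        cases hr with
        | first _ => exact Or.inl rfl
        | next h1 _ _ => exact Or.inr ⟨_, h1⟩
      · exact Or.inr ⟨_, Red.next hr h hs⟩

theorem Lnk.eq {D : TreeAmalgData G1 G2} {p q : D.PlusV} (h : D.Lnk p q) :
    D.toAmalg p = D.toAmalg q := by
  rcases h with h | h
  · exact Quot.sound h
  · exact (Quot.sound h).symm

theorem red_eq {D : TreeAmalgData G1 G2} {p0 p q : D.PlusV} (h : Red D p0 p q) :
    D.toAmalg p0 = D.toAmalg p := by
  induction h with
  | first h => rfl
  | next h1 h2 h3 ih => exact ih.trans h1.lnk.eq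

theorem amalg_inj (D : TreeAmalgData G1 G2) {p q : D.PlusV} (h : D.toAmalg p = D.toAmalg q)
    (hs : D.site p = D.site q) : p = q := by
  rcases D.red_of_chain (D.chain_of_eq h) with h | ⟨r, hr⟩
  · exact h.symm
  · exact absurd hs (Branch.ne hr.lnk.adj.symm hr.branch)

theorem amalg_lnk (D : TreeAmalgData G1 G2) {p q : D.PlusV} (h : D.toAmalg p = D.toAmalg q)
    (hs : (bipGraph D.Tadj).Adj (D.site p) (D.site q)) : D.Lnk p q := by
  rcases D.red_of_chain (D.chain_of_eq h) with h | ⟨r, hr⟩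
  · subst h; exact absurd rfl hs.ne
  · have h1 := hr.branch
    have h2 : D.site r = D.site p :=
      Branch.unique D.isTree hr.lnk.adj.symm hs.symm h1 (Branch.self_mem _ _)
    obtain rfl := D.amalg_inj (red_eq hr) h2.symm
    exact hr.lnk

theorem amalg_adj (D : TreeAmalgData G1 G2) {x y : D.AmalgV} (h : D.amalgGraph.Adj x y) :
    (∃ a v w, D.toAmalg (Sum.inl (a, v)) = x ∧ D.toAmalg (Sum.inl (a, w)) = y ∧ G1.Adj v w) ∨
    (∃ b v w, D.toAmalg (Sum.inr (b, v)) = x ∧ D.toAmalg (Sum.inr (b, w)) = y ∧ G2.Adj v w) := by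
  have key : ∀ x y : D.AmalgV, x ≠ y → ∀ p q, x = D.toAmalg p → y = D.toAmalg q →
      D.plusRel p q →
    (∃ a v w, D.toAmalg (Sum.inl (a, v)) = x ∧ D.toAmalg (Sum.inl (a, w)) = y ∧ G1.Adj v w) ∨
    (∃ b v w, D.toAmalg (Sum.inr (b, v)) = x ∧ D.toAmalg (Sum.inr (b, w)) = y ∧ G2.Adj v w) := by
    intro x y hne p q hx hy hpq
    rcases p with ⟨a, v⟩ | ⟨b, v⟩ <;> rcases q with ⟨a', w⟩ | ⟨b', w⟩
    · obtain ⟨e, h⟩ := hpq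
      simp only at e h
      subst e
      exact Or.inl ⟨a, v, w, hx.symm, hy.symm, h⟩
    · exfalso
      apply hne
      rw [hx, hy]
      exact Quot.sound ⟨_, _, rfl, rfl, hpq⟩
    · exact hpq.elim
    · obtain ⟨e, h⟩ := hpq
      simp only at e h
      subst e
      exact Or.inr ⟨b, v, w, hx.symm, hy.symm, h⟩
  have swap : ∀ x y : D.AmalgV,
    ((∃ a v w, D.toAmalg (Sum.inl (a, v)) = x ∧ D.toAmalg (Sum.inl (a, w)) = y ∧ G1.Adj v w) ∨
    (∃ b v w, D.toAmalg (Sum.inr (b, v)) = x ∧ D.toAmalg (Sum.inr (b, w)) = y ∧ G2.Adj v w)) →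
    ((∃ a v w, D.toAmalg (Sum.inl (a, v)) = y ∧ D.toAmalg (Sum.inl (a, w)) = x ∧ G1.Adj v w) ∨
    (∃ b v w, D.toAmalg (Sum.inr (b, v)) = y ∧ D.toAmalg (Sum.inr (b, w)) = x ∧ G2.Adj v w)) := by
    rintro x y (⟨a, v, w, h1, h2, h3⟩ | ⟨a, v, w, h1, h2, h3⟩)
    · exact Or.inl ⟨a, w, v, h2, h1, h3.symm⟩
    · exact Or.inr ⟨a, w, v, h2, h1, h3.symm⟩
  rw [amalgGraph, SimpleGraph.fromRel_adj] at h
  obtain ⟨hne, ⟨p, q, hx, hy, hpq⟩ | ⟨p, q, hx, hy, hpq⟩⟩ := h <;>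
    rw [plusGraph, SimpleGraph.fromRel_adj] at hpq <;>
    obtain ⟨-, hpq | hpq⟩ := hpq
  · exact key _ _ hne _ _ hx hy hpq
  · exact swap _ _ (key _ _ hne.symm _ _ hy hx hpq)
  · exact swap _ _ (key _ _ hne.symm _ _ hx hy hpq)
  · exact key _ _ hne _ _ hy hx hpq

theorem amalg_dist (D : TreeAmalgData G1 G2) {p q : D.PlusV} (h : D.plusRel p q) :
    D.toAmalg p = D.toAmalg q ∨ D.amalgGraph.Adj (D.toAmalg p) (D.toAmalg q) := by
  by_cases he : D.toAmalg p = D.toAmalg q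
  · exact Or.inl he
  · right
    rw [amalgGraph, SimpleGraph.fromRel_adj]
    refine ⟨he, Or.inl ⟨p, q, rfl, rfl, ?_⟩⟩
    rw [plusGraph, SimpleGraph.fromRel_adj]
    exact ⟨fun e => he (by rw [e]), Or.inl h⟩

theorem mem_support_inl (D : TreeAmalgData G1 G2) (a : D.VT1) (x : D.AmalgV) :
    Sum.inl a ∈ D.support x ↔ ∃ v, D.toAmalg (Sum.inl (a, v)) = x := by
  constructor
  · rintro ⟨⟨a', v⟩ | ⟨b, w⟩, hp, hs⟩
    · obtain rfl : a' = a := by simpa [site] using hs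
      exact ⟨v, hp⟩
    · simp [site] at hs
  · rintro ⟨v, hv⟩
    exact ⟨_, hv, rfl⟩

theorem mem_support_inr (D : TreeAmalgData G1 G2) (b : D.VT2) (x : D.AmalgV) :
    Sum.inr b ∈ D.support x ↔ ∃ v, D.toAmalg (Sum.inr (b, v)) = x := by
  constructor
  · rintro ⟨⟨a', v⟩ | ⟨b', w⟩, hp, hs⟩
    · simp [site] at hs
    · obtain rfl : b' = b := by simpa [site] using hs
      exact ⟨w, hp⟩
  · rintro ⟨v, hv⟩
    exact ⟨_, hv, rfl⟩

theorem treeDec (D : TreeAmalgData G1 G2) (hfi : D.FiniteIdentification) {V : Type u}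
    {G : SimpleGraph V} (e : G ≃g D.amalgGraph) :
    TreeDec G (bipGraph D.Tadj) (fun x => D.support (e x)) where
  tree := D.isTree
  nonempty x := by
    obtain ⟨p, hp⟩ := Quot.exists_rep (e x)
    exact ⟨D.site p, p, hp, rfl⟩
  fin x := hfi _
  conn := by
    rintro x _ _ ⟨p, hp, rfl⟩ ⟨q, hq, rfl⟩
    have h := D.chain_of_eq (hp.trans hq.symm)
    clear hq
    induction h with
    | refl => exact Relation.ReflTransGen.refl
    | tail hb h ih =>
      rename_i b c
      refine ih.tail ?_
      have hpb : D.toAmalg b = e x := by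
        clear ih
        rw [← hp]
        clear h hp
        induction hb with
        | refl => rfl
        | tail _ h ih => rw [← ih]; exact h.symm.eq
      exact ⟨h.adj, ⟨b, hpb, rfl⟩, ⟨c, h.symm.eq.trans hpb, rfl⟩⟩
  adj x y h := by
    have h' := e.map_adj_iff.2 h
    rcases D.amalg_adj h' with ⟨a, v, w, h1, h2, -⟩ | ⟨a, v, w, h1, h2, -⟩
    · exact ⟨Sum.inl a, ⟨_, h1, rfl⟩, ⟨_, h2, rfl⟩⟩
    · exact ⟨Sum.inr a, ⟨_, h1, rfl⟩, ⟨_, h2, rfl⟩⟩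
  adh := by
    have key : ∀ a b, D.Tadj a b → ∃ x, Sum.inl a ∈ D.support (e x) ∧
        Sum.inr b ∈ D.support (e x) := by
      intro a b h
      obtain ⟨v, hv⟩ := D.S1_nonempty (D.lab1 a b h)
      refine ⟨e.symm (D.toAmalg (Sum.inl (a, v))), ?_, ?_⟩
      · exact ⟨Sum.inl (a, v), by simp, rfl⟩
      · refine ⟨Sum.inr (b, D.glue (D.lab1 a b h) (D.lab2 a b h) v), ?_, rfl⟩
        rw [RelIso.apply_symm_apply]
        exact (Quot.sound ⟨_, _, rfl, rfl, h, hv, rfl⟩).symm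
    rintro (a | b) (a' | b') h
    · exact (bip_adj_ll h).elim
    · exact key _ _ (bip_adj_lr.1 h)
    · obtain ⟨x, h1, h2⟩ := key _ _ (bip_adj_rl.1 h)
      exact ⟨x, h2, h1⟩
    · exact (bip_adj_rr h).elim

/-- Vertices in a common adhesion set. -/
theorem mem_adh1 (D : TreeAmalgData G1 G2) {a : D.VT1} {v : V1} {s : D.VT1 ⊕ D.VT2}
    (hs : (bipGraph D.Tadj).Adj (Sum.inl a) s)
    (h : s ∈ D.support (D.toAmalg (Sum.inl (a, v)))) :
    ∃ b, ∃ hb : D.Tadj a b, s = Sum.inr b ∧ v ∈ D.S1 (D.lab1 a b hb) := by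
  rcases s with a' | b
  · exact (bip_adj_ll hs).elim
  · obtain ⟨w, hw⟩ := (D.mem_support_inr _ _).1 h
    rcases D.amalg_lnk hw.symm hs with ⟨p, q, h1, h2, h3⟩ | ⟨p, q, h1, h2, h3⟩
    · cases h1; cases h2
      obtain ⟨e1, e2, e3⟩ := h3
      exact ⟨b, e1, rfl, e2⟩
    · cases h1

theorem mem_adh2 (D : TreeAmalgData G1 G2) {b : D.VT2} {v : V2} {s : D.VT1 ⊕ D.VT2}
    (hs : (bipGraph D.Tadj).Adj (Sum.inr b) s)
    (h : s ∈ D.support (D.toAmalg (Sum.inr (b, v)))) :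
    ∃ a, ∃ hb : D.Tadj a b, s = Sum.inl a ∧ v ∈ D.S2 (D.lab2 a b hb) := by
  rcases s with a | b'
  · obtain ⟨w, hw⟩ := (D.mem_support_inl _ _).1 h
    rcases D.amalg_lnk hw.symm hs with ⟨p, q, h1, h2, h3⟩ | ⟨p, q, h1, h2, h3⟩
    · cases h1
    · cases h1; cases h2
      obtain ⟨e1, e2, e3⟩ := h3
      refine ⟨a, e1, rfl, ?_⟩
      simp only at e3
      rw [e3]
      exact (D.glue_bij _ _).mapsTo e2
  · exact (bip_adj_rr hs).elim

theorem main (D : TreeAmalgData G1 G2) {VG VH : Type u} {G : SimpleGraph VG}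
    {H : SimpleGraph VH} (hcG : G.Connected) (hcH : H.Connected) (hc1 : G1.Connected)
    (hc2 : G2.Connected)
    (hlfG : LocallyFiniteGraph G) (hlfH : LocallyFiniteGraph H) (hqtH : QuasiTransitive H)
    (hfa : D.FiniteAdhesion) (hfi : D.FiniteIdentification) (hg1 : GoodAction G1 D.S1)
    (hg2 : GoodAction G2 D.S2) (e : G ≃g D.amalgGraph)
    (hone : OneEnded H) (hemb : QIEmbeds H G) : QIEmbeds H G1 ∨ QIEmbeds H G2 := by
  obtain ⟨M1, hM1⟩ := goodAction_bound hc1 hfa.1 hg1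
  obtain ⟨M2, hM2⟩ := goodAction_bound hc2 hfa.2 hg2
  have hD := D.treeDec hfi e
  obtain ⟨γ, c, φ, hγ, hc, hφ⟩ := hemb
  let ι1 : D.VT1 → V1 → VG := fun a v => e.symm (D.toAmalg (Sum.inl (a, v)))
  let ι2 : D.VT2 → V2 → VG := fun b v => e.symm (D.toAmalg (Sum.inr (b, v)))
  have eι1 : ∀ a v, e (ι1 a v) = D.toAmalg (Sum.inl (a, v)) := fun a v => by simp [ι1]
  have eι2 : ∀ a v, e (ι2 a v) = D.toAmalg (Sum.inr (a, v)) := fun a v => by simp [ι2]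
  have hG : ∀ p q, D.plusRel p q →
      G.dist (e.symm (D.toAmalg p)) (e.symm (D.toAmalg q)) ≤ 1 := by
    intro p q h
    rcases D.amalg_dist h with h | h
    · rw [h]; simp
    · exact (dist_eq_one_iff_adj.2 (e.symm.map_adj_iff.2 h)).le
  have hG1 : ∀ a p q, G1.Adj p q → G.dist (ι1 a p) (ι1 a q) ≤ 1 := fun a p q h =>
    hG _ _ ⟨rfl, h⟩
  have hG2 : ∀ a p q, G2.Adj p q → G.dist (ι2 a p) (ι2 a q) ≤ 1 := fun a p q h =>
    hG _ _ ⟨rfl, h⟩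
  have hr1 : ∀ a x, Sum.inl a ∈ D.support (e x) ↔ ∃ v, ι1 a v = x := by
    intro a x
    rw [D.mem_support_inl]
    simp only [ι1, RelIso.symm_apply_eq] 
  have hr2 : ∀ a x, Sum.inr a ∈ D.support (e x) ↔ ∃ v, ι2 a v = x := by
    intro a x
    rw [D.mem_support_inr]
    simp only [ι2, RelIso.symm_apply_eq]
  have hA1 : ∀ a s p q, (bipGraph D.Tadj).Adj (Sum.inl a) s → s ∈ D.support (e (ι1 a p)) →
      s ∈ D.support (e (ι1 a q)) → G1.dist p q ≤ M1 := by
    intro a s p q hs hp hq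
    rw [eι1] at hp hq
    obtain ⟨b, hb, rfl, h1⟩ := D.mem_adh1 hs hp
    obtain ⟨b', hb', h3, h2⟩ := D.mem_adh1 hs hq
    cases h3
    exact hM1 _ _ h1 _ h2
  have hA2 : ∀ a s p q, (bipGraph D.Tadj).Adj (Sum.inr a) s → s ∈ D.support (e (ι2 a p)) →
      s ∈ D.support (e (ι2 a q)) → G2.dist p q ≤ M2 := by
    intro a s p q hs hp hq
    rw [eι2] at hp hq
    obtain ⟨b, hb, rfl, h1⟩ := D.mem_adh2 hs hp
    obtain ⟨b', hb', h3, h2⟩ := D.mem_adh2 hs hq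
    cases h3
    exact hM2 _ _ h1 _ h2
  have hM : ∀ t s x y, (bipGraph D.Tadj).Adj t s → t ∈ D.support (e x) → s ∈ D.support (e x) →
      t ∈ D.support (e y) → s ∈ D.support (e y) → G.dist x y ≤ max M1 M2 := by
    rintro (a | b) s x y hts htx hsx hty hsy
    · obtain ⟨p, rfl⟩ := (hr1 a x).1 htx
      obtain ⟨q, rfl⟩ := (hr1 a y).1 hty
      have h1 := hA1 a s p q hts hsx hsy
      have h2 := TreeDec.lipschitz hc1 hcG (ι1 a) 1 (hG1 a) p q
      exact le_max_of_le_left (by omega)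
    · obtain ⟨p, rfl⟩ := (hr2 b x).1 htx
      obtain ⟨q, rfl⟩ := (hr2 b y).1 hty
      have h1 := hA2 b s p q hts hsx hsy
      have h2 := TreeDec.lipschitz hc2 hcG (ι2 b) 1 (hG2 b) p q
      exact le_max_of_le_right (by omega)
  obtain ⟨R, hR⟩ := hD.exists_small hcG hcH hlfH hqtH hone.2 (max M1 M2) hM φ γ c hγ hc hφ
  obtain ⟨h0⟩ := hcH.nonempty
  obtain ⟨t, ht⟩ := hD.exists_sink hcG hlfG h0 φ R hR
  rcases t with a | b
  · left
    refine hD.qi_bag hcG hc1 (Sum.inl a) (ι1 a) M1 (hr1 a) ?_ (hG1 a) ?_ (hA1 a) φ γ c hγ hc hφ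
      R ht
    · intro p q hpq
      have h1 := D.amalg_inj (e.symm.injective hpq) rfl
      simpa using h1
    · intro x y hxy
      rcases D.amalg_adj (e.map_adj_iff.2 hxy) with ⟨a', v, w, h1, h2, h3⟩ | ⟨a', v, w, h1, h2, h3⟩
      · refine ⟨Sum.inl a', ⟨_, h1, rfl⟩, ⟨_, h2, rfl⟩, ?_⟩
        intro he
        cases he
        exact ⟨v, w, by simp [ι1, h1], by simp [ι1, h2], (dist_eq_one_iff_adj.2 h3).le⟩
      · refine ⟨Sum.inr a', ⟨_, h1, rfl⟩, ⟨_, h2, rfl⟩, ?_⟩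
        intro he
        cases he
  · right
    refine hD.qi_bag hcG hc2 (Sum.inr b) (ι2 b) M2 (hr2 b) ?_ (hG2 b) ?_ (hA2 b) φ γ c hγ hc hφ
      R ht
    · intro p q hpq
      have h1 := D.amalg_inj (e.symm.injective hpq) rfl
      simpa using h1
    · intro x y hxy
      rcases D.amalg_adj (e.map_adj_iff.2 hxy) with ⟨a', v, w, h1, h2, h3⟩ | ⟨a', v, w, h1, h2, h3⟩
      · refine ⟨Sum.inl a', ⟨_, h1, rfl⟩, ⟨_, h2, rfl⟩, ?_⟩
        intro he
        cases he
      · refine ⟨Sum.inr a', ⟨_, h1, rfl⟩, ⟨_, h2, rfl⟩, ?_⟩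
        intro he
        cases he
        exact ⟨v, w, by simp [ι2, h1], by simp [ι2, h2], (dist_eq_one_iff_adj.2 h3).le⟩

end TreeAmalgData

theorem goodIter_ne_nil {Z : BGraph.{u}} {l : List BGraph.{u}} (h : GoodIterAmalg Z l) :
    l ≠ [] := by
  induction h with
  | single X => simp
  | step _ _ _ ih1 _ => simp [ih1]

theorem goodIter_singleton {Z Y : BGraph.{u}} (h : GoodIterAmalg Z [Y]) : Z = Y := by
  generalize hl : [Y] = l at h
  cases h with
  | single X => simpa using hl.symm
  | step h1 h2 _ =>
    rename_i l1 l2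
    have e1 := List.length_pos_iff.2 (goodIter_ne_nil h1)
    have e2 := List.length_pos_iff.2 (goodIter_ne_nil h2)
    have := congrArg List.length hl
    simp at this
    omega

theorem goodIter_pair {Z X Y : BGraph.{u}} (h : GoodIterAmalg Z [X, Y]) :
    GoodAmalgStep X Y Z := by
  generalize hl : [X, Y] = l at h
  cases h with
  | single X => simp at hl
  | step h1 h2 h3 =>
    rename_i X' Y' l1 l2
    rcases l1 with _ | ⟨a, _ | ⟨b, l1⟩⟩
    · exact absurd rfl (goodIter_ne_nil h1)
    · simp at hl
      obtain ⟨rfl, rfl⟩ := hl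
      obtain rfl := goodIter_singleton h1
      obtain rfl := goodIter_singleton h2
      exact h3
    · simp at hl
      exact absurd hl.2.2.2 (goodIter_ne_nil h2)

/-- **Lemma.** Let `G` and `H` be connected quasi-transitive locally finite graphs and let
`(G1, G2)` be a factorisation of `G`.  If `H` has precisely one end and embeds
quasi-isometrically into `G`, then it embeds quasi-isometrically into `G1` or into `G2`. -/
theorem qiEmbeds_factor_of_oneEnded {VG VH V1 V2 : Type u}
    (G : SimpleGraph VG) (H : SimpleGraph VH)
    (G1 : SimpleGraph V1) (G2 : SimpleGraph V2)
    (hcG : G.Connected) (hcH : H.Connected)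
    (hlfG : LocallyFiniteGraph G) (hlfH : LocallyFiniteGraph H)
    (hqtG : QuasiTransitive G) (hqtH : QuasiTransitive H)
    (hfac : IsFactorisation ⟨VG, G⟩ [⟨V1, G1⟩, ⟨V2, G2⟩])
    (hone : OneEnded H)
    (hemb : QIEmbeds H G) :
    QIEmbeds H G1 ∨ QIEmbeds H G2 := by
  obtain ⟨hall, hit⟩ := hfac
  obtain ⟨D, hfa, hfi, hg1, hg2, ⟨e⟩⟩ := goodIter_pair hit
  have h1 := hall ⟨V1, G1⟩ (by simp)
  have h2 := hall ⟨V2, G2⟩ (by simp)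
  exact D.main hcG hcH h1.1 h2.1 hlfG hlfH hqtH hfa hfi hg1 hg2 e hone hemb
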